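/- Let H be a connected graded k-Hopf algebra with antipode S, and let S² = S ∘ S. Let p be a positive integer such that (id − S²)(H_i) = 0 for all i ∈ {2, 3, …, p}. Then: (a) for any integer u > p, we have (id − S²)^{u−p}(H_{≤u}) ⊆ Prim H and ((id + S) ∘ (id − S²)^{u−p})(H_{≤u}) = 0; (b) for any integer u ≥ p, we have (id − S²)^{u−p+1}(H_{≤u}) = 0. Here H_{≤u} = ⊕_{i=0}^{u} H_i, and powers denote composition powers. -/

import Mathlib

/-!
Write `e = 1 - S²`. Since `S` is an anti-endomorphism of the coalgebra `H`
(`comul_antipode`), `S²` is a coalgebra endomorphism, and so `Δ ∘ e = D ∘ Δ` where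
`D = e ⊗ 1 + S² ⊗ e` (`twist` below); hence `Δ ∘ e ^ n = D ^ n ∘ Δ`.

The operator `e` kills `1` and, by connectedness, all of `G 1` (whose elements are primitive), so it
kills `G i` for every `i ≤ p`. By strong induction on `u > p`, with `n = u - p`: for `x ∈ G u`,
`Δ x = x ⊗ 1 + 1 ⊗ x + w` with `w` a sum of tensors `a ⊗ b` of positive degrees `i + j = u`
(`comul_sub_mem`). By the induction hypothesis `e ^ r a = 0` and `e ^ s b = 0` with `r = i - p + 1`,
`s = j - p + 1` (truncated subtraction), and `r + s ≤ n + 1` as `p ≥ 1`; hence `D ^ n` kills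
`a ⊗ b` (`twist_pow_tmul_eq_zero`). Therefore `e ^ n x` is primitive. As `S y = -y` for primitive
`y`, also `(1 + S) (e ^ n x) = 0`, and `e ^ (n + 1) x = (1 - S) ((1 + S) (e ^ n x)) = 0`.
-/

open TensorProduct

/-- The image of `A ⊗ B` under the canonical map `A ⊗ B → H ⊗ H` obtained by tensoring
the inclusion maps. -/
noncomputable def tmulImage {k H : Type*} [CommRing k] [AddCommGroup H] [Module k H]
    (A B : Submodule k H) : Submodule k (H ⊗[k] H) :=
  LinearMap.range (TensorProduct.mapIncl A B)

/-- The submodule of primitive elements of `H` (with respect to the unity `one`):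
those `x` with `Δ x = x ⊗ one + one ⊗ x`. -/
noncomputable def primitives (k : Type*) (H : Type*) [CommRing k] [AddCommGroup H]
    [Module k H] [Coalgebra k H] (one : H) : Submodule k H :=
  LinearMap.ker (Coalgebra.comul (R := k) - (TensorProduct.mk k H H).flip one
    - TensorProduct.mk k H H one)

/-! ### The antipode and the coproduct -/

section Antipode

open Coalgebra HopfAlgebra WithConv

variable {k H : Type*} [CommRing k] [Ring H] [HopfAlgebra k H]

/-- Coassociativity for the fourfold coproduct, regrouping `(x₁ ⊗ x₂) ⊗ (x₃ ⊗ x₄)` as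
`x₁ ⊗ ((x₂ ⊗ x₃) ⊗ x₄)`. -/
lemma assoc_map_comul_comul (x : H) :
    TensorProduct.assoc k H H (H ⊗[k] H)
        (TensorProduct.map (comul (R := k)) (comul (R := k)) (comul (R := k) x)) =
      ((TensorProduct.assoc k H H H).toLinearMap ∘ₗ (comul (R := k) (A := H)).rTensor H ∘ₗ
        comul (R := k)).lTensor H (comul (R := k) x) := by
  have h : ∀ t : (H ⊗[k] H), TensorProduct.assoc k H H (H ⊗[k] H)
        (TensorProduct.map (comul (R := k)) (comul (R := k)) t) =
      ((comul (R := k) (A := H)).lTensor H).lTensor H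
        (TensorProduct.assoc k H H H ((comul (R := k) (A := H)).rTensor H t)) := by
    intro t
    induction t with
    | zero => simp
    | add a b ha hb => simp only [map_add, ha, hb]
    | tmul a b =>
      simp only [TensorProduct.map_tmul, LinearMap.rTensor_tmul]
      generalize comul (R := k) a = s
      induction s with
      | zero => simp
      | add a b ha hb => simp only [map_add, TensorProduct.add_tmul, ha, hb]
      | tmul c d => simp
  rw [h, Coalgebra.coassoc_apply, Coalgebra.coassoc, LinearMap.lTensor_comp]
  rfl

/-- The antipode is a coalgebra anti-endomorphism: both sides are convolution inverses of
`Δ : H → H ⊗ H`. -/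
lemma comul_antipode (x : H) :
    comul (R := k) (antipode k x) = TensorProduct.map (antipode k) (antipode k)
      (TensorProduct.comm k H H (comul (R := k) x)) := by
  let F : H →ₗ[k] H ⊗[k] H := comul ∘ₗ antipode k
  let F' : H →ₗ[k] H ⊗[k] H := TensorProduct.map (antipode k) (antipode k) ∘ₗ
    (TensorProduct.comm k H H).toLinearMap ∘ₗ comul
  have hr : toConv (comul (R := k) (A := H)) * toConv F = 1 := LinearMap.comul_right_inv
  have hl : toConv F' * toConv (comul (R := k) (A := H)) = 1 := by
    -- `M (a ⊗ b) = S(a) b`, and `T` sends `a ⊗ (b ⊗ (c ⊗ d))` to `S(b) c ⊗ S(a) d`.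
    let M : H ⊗[k] H →ₗ[k] H := LinearMap.mul' k H ∘ₗ (antipode k).rTensor H
    let T : H ⊗[k] (H ⊗[k] (H ⊗[k] H)) →ₗ[k] H ⊗[k] H :=
      TensorProduct.map M M ∘ₗ (TensorProduct.leftComm k H (H ⊗[k] H) H).toLinearMap ∘ₗ
        (TensorProduct.assoc k H H H).symm.toLinearMap.lTensor H
    have h1 : ∀ t : H ⊗[k] H, LinearMap.mul' k (H ⊗[k] H) (TensorProduct.map F' comul t) =
        T (TensorProduct.assoc k H H (H ⊗[k] H) (TensorProduct.map comul comul t)) := by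
      intro t
      induction t with
      | zero => simp
      | add a b ha hb => simp only [map_add, ha, hb]
      | tmul a b =>
        simp only [TensorProduct.map_tmul, F', LinearMap.comp_apply, LinearEquiv.coe_coe]
        generalize comul (R := k) a = s
        generalize comul (R := k) b = r
        induction s with
        | zero => simp
        | add a b ha hb => simp only [map_add, TensorProduct.add_tmul, ha, hb]
        | tmul c d =>
          induction r with
          | zero => simp
          | add a b ha hb => simp only [map_add, TensorProduct.tmul_add, ha, hb]
          | tmul c' d' => simp [T, M]
    have h2 : ∀ (a : H) (s : H ⊗[k] H),
        T (a ⊗ₜ TensorProduct.assoc k H H H ((comul (R := k) (A := H)).rTensor H s)) =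
          1 ⊗ₜ M (a ⊗ₜ TensorProduct.lid k H ((counit (R := k) (A := H)).rTensor H s)) := by
      intro a s
      induction s with
      | zero => simp
      | add a b ha hb => simp only [map_add, TensorProduct.tmul_add, ha, hb]
      | tmul c d =>
        simp [T, M, Algebra.algebraMap_eq_smul_one, TensorProduct.smul_tmul]
    have h3 : ∀ t : H ⊗[k] H, T (((TensorProduct.assoc k H H H).toLinearMap ∘ₗ
        (comul (R := k) (A := H)).rTensor H ∘ₗ comul (R := k)).lTensor H t) = 1 ⊗ₜ M t := by
      intro t
      induction t with
      | zero => simp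
      | add a b ha hb => simp only [map_add, TensorProduct.tmul_add, ha, hb]
      | tmul a b =>
        simp only [LinearMap.lTensor_tmul, LinearMap.comp_apply, LinearEquiv.coe_coe, h2,
          Coalgebra.rTensor_counit_comul, TensorProduct.lid_tmul, one_smul]
    ext x
    rw [LinearMap.convMul_apply, LinearMap.convOne_apply]
    refine (h1 _).trans ?_
    rw [assoc_map_comul_comul, h3]
    simp [M, Algebra.algebraMap_eq_smul_one, Algebra.TensorProduct.one_def]
  have := left_inv_eq_right_inv hl hr
  exact (congr(($this).ofConv x)).symm

lemma comul_antipode_sq (x : H) :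
    comul (R := k) (antipode k (antipode k x)) =
      TensorProduct.map (antipode k ∘ₗ antipode k) (antipode k ∘ₗ antipode k)
        (comul (R := k) x) := by
  rw [comul_antipode, comul_antipode]
  generalize comul (R := k) x = t
  induction t with
  | zero => simp
  | add a b ha hb => simp only [map_add, ha, hb]
  | tmul a b => simp

lemma mem_primitives_iff (x : H) :
    x ∈ primitives k H 1 ↔ comul (R := k) x = x ⊗ₜ 1 + 1 ⊗ₜ x := by
  simp [primitives, sub_sub, sub_eq_zero]

lemma antipode_of_mem_primitives {x : H} (hx : x ∈ primitives k H 1) :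
    antipode k x = -x := by
  rw [mem_primitives_iff] at hx
  have hc : algebraMap k H (counit (R := k) x) = 0 := by
    have h := congrArg (TensorProduct.lid k H) (Coalgebra.rTensor_counit_comul (R := k) x)
    rw [hx] at h
    simpa [Algebra.algebraMap_eq_smul_one] using h
  have h := mul_antipode_rTensor_comul_apply (R := k) x
  rw [hx, hc] at h
  simpa [add_eq_zero_iff_eq_neg] using h

end Antipode

/-! ### The operator `e ⊗ 1 + S² ⊗ e` -/

section Twist

open Coalgebra HopfAlgebra

variable {k H : Type*} [CommRing k] [Ring H] [HopfAlgebra k H]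

/-- The operator `e ⊗ 1 + S² ⊗ e` on `H ⊗ H`, where `e = 1 - S²`. It equals
`1 ⊗ 1 - S² ⊗ S²`. -/
noncomputable def twist (S : Module.End k H) : Module.End k (H ⊗[k] H) :=
  TensorProduct.map (1 - S ^ 2) 1 + TensorProduct.map (S ^ 2) (1 - S ^ 2)

lemma twist_tmul (S : Module.End k H) (a b : H) :
    twist S (a ⊗ₜ b) = ((1 - S ^ 2 : Module.End k H) a) ⊗ₜ b +
      ((S ^ 2) a) ⊗ₜ ((1 - S ^ 2 : Module.End k H) b) := by
  rw [twist, LinearMap.add_apply, TensorProduct.map_tmul, TensorProduct.map_tmul,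
    Module.End.one_apply]

/-- A tensor whose factors are killed by `e ^ r` and `e ^ s` is killed by the `n`-th power of
`e ⊗ 1 + S² ⊗ e` once `n ≥ r + s - 1`: its two commuting summands apply `e` to one factor each. -/
lemma twist_pow_tmul_eq_zero (S : Module.End k H) (n : ℕ) : ∀ (r s : ℕ) (a b : H),
    ((1 - S ^ 2 : Module.End k H) ^ r) a = 0 →
    ((1 - S ^ 2 : Module.End k H) ^ s) b = 0 → r + s ≤ n + 1 →
    (twist S ^ n) (a ⊗ₜ b) = 0 := by
  induction n with
  | zero =>
    intro r s a b ha hb hrs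
    obtain rfl | rfl : r = 0 ∨ s = 0 := by omega
    · rw [pow_zero, Module.End.one_apply] at ha
      simp [ha]
    · rw [pow_zero, Module.End.one_apply] at hb
      simp [hb]
  | succ n ih =>
    intro r s a b ha hb hrs
    rcases r with _ | r
    · rw [pow_zero, Module.End.one_apply] at ha
      simp [ha]
    rcases s with _ | s
    · rw [pow_zero, Module.End.one_apply] at hb
      simp [hb]
    rw [pow_succ, Module.End.mul_apply, twist_tmul, map_add,
      ih r (s + 1) _ b (by rw [← Module.End.mul_apply, ← pow_succ, ha]) hb (by omega),
      ih (r + 1) s _ _ ?_ (by rw [← Module.End.mul_apply, ← pow_succ, hb]) (by omega), add_zero]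
    have hcomm : Commute ((1 - S ^ 2 : Module.End k H) ^ (r + 1)) (S ^ 2) :=
      ((Commute.one_left _).sub_left (Commute.refl _)).pow_left _
    rw [← Module.End.mul_apply, hcomm.eq, Module.End.mul_apply, ha, map_zero]

lemma twist_pow_one_tmul (S : Module.End k H) (h1 : S 1 = 1) (n : ℕ) (x : H) :
    (twist S ^ n) (1 ⊗ₜ x) = 1 ⊗ₜ ((1 - S ^ 2 : Module.End k H) ^ n) x := by
  induction n generalizing x with
  | zero => simp
  | succ n ih =>
    rw [pow_succ, Module.End.mul_apply, twist_tmul]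
    simp [pow_succ _ n, pow_two, h1, ih]

lemma twist_pow_tmul_one (S : Module.End k H) (h1 : S 1 = 1) (n : ℕ) (x : H) :
    (twist S ^ n) (x ⊗ₜ 1) = (((1 - S ^ 2 : Module.End k H) ^ n) x) ⊗ₜ 1 := by
  induction n generalizing x with
  | zero => simp
  | succ n ih =>
    rw [pow_succ, Module.End.mul_apply, twist_tmul]
    simp [pow_succ _ n, pow_two, h1, ih]

lemma comul_one_sub_sq_pow (n : ℕ) (x : H) :
    comul (R := k) (((1 - antipode k ^ 2 : Module.End k H) ^ n) x) =
      (twist (antipode k) ^ n) (comul (R := k) x) := by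
  induction n generalizing x with
  | zero => simp
  | succ n ih =>
    have h : comul (R := k) ((1 - antipode k ^ 2 : Module.End k H) x) =
        twist (antipode k) (comul (R := k) x) := by
      have h2 : (antipode k ^ 2 : Module.End k H) x = antipode k (antipode k x) := by
        simp [pow_two]
      rw [LinearMap.sub_apply, map_sub, Module.End.one_apply, h2, comul_antipode_sq]
      generalize comul (R := k) x = t
      induction t with
      | zero => simp
      | add a b ha hb =>
        rw [map_add, map_add, ← ha, ← hb]
        abel
      | tmul a b =>
        rw [twist_tmul]
        simp [pow_two, TensorProduct.sub_tmul, TensorProduct.tmul_sub]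
    rw [pow_succ, Module.End.mul_apply, ih, h, pow_succ, Module.End.mul_apply]

end Twist

/-! ### The reduced coproduct in a connected grading -/

section Grading

open Coalgebra

variable {k H : Type*} [CommRing k]

lemma sum_submodule_le {M : Type*} [AddCommGroup M] [Module k M] {s : Finset ℕ}
    {F : ℕ → Submodule k M} {K : Submodule k M} (h : ∀ i ∈ s, F i ≤ K) :
    ∑ i ∈ s, F i ≤ K := by
  refine Finset.sum_induction F (· ≤ K) (fun a b ha hb => sup_le ha hb) bot_le h

lemma tmulImage_le [AddCommGroup H] [Module k H] {A B : Submodule k H}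
    {K : Submodule k (H ⊗[k] H)} (h : ∀ a ∈ A, ∀ b ∈ B, a ⊗ₜ[k] b ∈ K) :
    tmulImage A B ≤ K := by
  rintro _ ⟨t, rfl⟩
  induction t with
  | zero => simp
  | add a b ha hb => rw [map_add]; exact K.add_mem ha hb
  | tmul a b => exact h a a.2 b b.2

variable [Ring H] [Bialgebra k H]

/-- In a connected graded bialgebra, the reduced coproduct of an element of degree `m + 1` lies in
the sum of the `G i ⊗ G j` with `i, j > 0` and `i + j = m + 1`. -/
lemma comul_sub_mem (G : ℕ → Submodule k H)
    (hcomulG : ∀ n : ℕ, Submodule.map (Coalgebra.comul (R := k) (A := H)) (G n) ≤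
      ∑ i ∈ Finset.range (n + 1), tmulImage (G i) (G (n - i)))
    (hcounitG : ∀ n : ℕ, 0 < n → ∀ x ∈ G n, Coalgebra.counit (R := k) x = 0)
    (h0 : ∀ a ∈ G 0, a = counit (R := k) a • (1 : H)) (m : ℕ) (x : H) (hx : x ∈ G (m + 1)) :
    comul (R := k) x - x ⊗ₜ 1 - 1 ⊗ₜ x ∈
      ∑ i ∈ Finset.range m, tmulImage (G (i + 1)) (G (m - i)) := by
  have h := hcomulG (m + 1) ⟨x, hx, rfl⟩
  rw [Finset.sum_range_succ, Finset.sum_range_succ'] at h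
  obtain ⟨_, h', t, ht, hxt⟩ := Submodule.mem_sup.1 h
  obtain ⟨w, hw, s, hs, rfl⟩ := Submodule.mem_sup.1 h'
  simp only [Nat.add_sub_add_right] at hw
  have hs' : ∃ y ∈ G (m + 1), (1 : H) ⊗ₜ[k] y = s := by
    refine (tmulImage_le (K := (G (m + 1)).map (TensorProduct.mk k H H 1)) ?_) hs
    intro a ha b hb
    refine ⟨counit (R := k) a • b, (G _).smul_mem _ hb, ?_⟩
    conv_rhs => rw [h0 a ha]
    simp [TensorProduct.smul_tmul]
  have ht' : ∃ y ∈ G (m + 1), y ⊗ₜ[k] (1 : H) = t := by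
    refine (tmulImage_le (K := (G (m + 1)).map ((TensorProduct.mk k H H).flip 1)) ?_) ht
    intro a ha b hb
    rw [Nat.sub_self] at hb
    refine ⟨counit (R := k) b • a, (G _).smul_mem _ ha, ?_⟩
    conv_rhs => rw [h0 b hb]
    simp
  obtain ⟨y, hy, rfl⟩ := hs'
  obtain ⟨z, hz, rfl⟩ := ht'
  have hwl : (counit (R := k) (A := H)).rTensor H w = 0 := by
    refine (sum_submodule_le (K := LinearMap.ker _) fun i _ => tmulImage_le ?_) hw
    intro a ha b hb
    simp [hcounitG _ i.succ_pos a ha]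
  have hwr : (counit (R := k) (A := H)).lTensor H w = 0 := by
    refine (sum_submodule_le (K := LinearMap.ker _) fun i hi => tmulImage_le ?_) hw
    intro a ha b hb
    simp [hcounitG _ (by have := Finset.mem_range.1 hi; omega) b hb]
  have hxy : y = x := by
    have h := congrArg (TensorProduct.lid k H) (Coalgebra.rTensor_counit_comul (R := k) x)
    rw [← hxt] at h
    simpa [hwl, hcounitG _ m.succ_pos z hz] using h
  have hxz : z = x := by
    have h := congrArg (TensorProduct.rid k H) (Coalgebra.lTensor_counit_comul (R := k) x)
    rw [← hxt] at h
    simpa [hwr, hcounitG _ m.succ_pos y hy] using h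
  subst hxy
  subst hxz
  rw [← hxt]
  convert hw using 1
  abel

end Grading

/-! ### Iterates of `1 - S²` -/

theorem stmt_18 {k H : Type*} [CommRing k] [Ring H] [HopfAlgebra k H]
    (G : ℕ → Submodule k H)
    (hdirect : DirectSum.IsInternal G)
    (hmulG : ∀ i j : ℕ, ∀ a ∈ G i, ∀ b ∈ G j, a * b ∈ G (i + j))
    (honeG : (1 : H) ∈ G 0)
    (hcomulG : ∀ n : ℕ, Submodule.map (Coalgebra.comul (R := k) (A := H)) (G n) ≤
      ∑ i ∈ Finset.range (n + 1), tmulImage (G i) (G (n - i)))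
    (hcounitG : ∀ n : ℕ, 0 < n → ∀ x ∈ G n, Coalgebra.counit (R := k) x = 0)
    (hconn : Function.Bijective fun x : G 0 => Coalgebra.counit (R := k) (x : H))
    (S : Module.End k H) (hS : S = HopfAlgebra.antipode (R := k))
    (p : ℕ) (hp : 0 < p)
    (hann : ∀ i : ℕ, 2 ≤ i → i ≤ p →
      Submodule.map ((1 - S ^ 2 : Module.End k H) : H →ₗ[k] H) (G i) = ⊥) :
    (∀ u : ℕ, p < u →
      Submodule.map (((1 - S ^ 2) ^ (u - p) : Module.End k H) : H →ₗ[k] H)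
          (∑ i ∈ Finset.range (u + 1), G i) ≤ primitives k H 1 ∧
      Submodule.map (((1 + S) * (1 - S ^ 2) ^ (u - p) : Module.End k H) : H →ₗ[k] H)
          (∑ i ∈ Finset.range (u + 1), G i) = ⊥) ∧
    (∀ u : ℕ, p ≤ u →
      Submodule.map (((1 - S ^ 2) ^ (u - p + 1) : Module.End k H) : H →ₗ[k] H)
          (∑ i ∈ Finset.range (u + 1), G i) = ⊥) := by
  subst hS
  set S : Module.End k H := HopfAlgebra.antipode k with hS
  have hS1 : S 1 = 1 := HopfAlgebra.antipode_one
  have h0 : ∀ a ∈ G 0, a = Coalgebra.counit (R := k) a • (1 : H) := by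
    intro a ha
    have := @hconn.1 ⟨a, ha⟩ ⟨Coalgebra.counit (R := k) a • (1 : H), (G 0).smul_mem _ honeG⟩
      (by simp)
    exact congrArg Subtype.val this
  have hsplit := comul_sub_mem G hcomulG hcounitG h0
  have hprimS : ∀ y ∈ primitives k H 1, (1 + S) y = 0 := by
    intro y hy
    rw [LinearMap.add_apply, Module.End.one_apply, hS, antipode_of_mem_primitives hy,
      add_neg_cancel]
  have hfactor : (1 - S ^ 2 : Module.End k H) = (1 - S) * (1 + S) := by
    rw [sub_mul, one_mul, mul_add, mul_one, pow_two]
    abel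
  have hprime : ∀ y ∈ primitives k H 1, (1 - S ^ 2 : Module.End k H) y = 0 := by
    intro y hy
    rw [hfactor, Module.End.mul_apply, hprimS y hy, map_zero]
  have hlow : ∀ i ≤ p, ∀ x ∈ G i, (1 - S ^ 2 : Module.End k H) x = 0 := by
    intro i hi x hx
    rcases i with _ | _ | i
    · rw [h0 x hx]
      simp [pow_two, hS1]
    · refine hprime x ((mem_primitives_iff x).2 ?_)
      have := hsplit 0 x hx
      rw [Finset.range_zero, Finset.sum_empty, Submodule.zero_eq_bot, Submodule.mem_bot,
        sub_sub, sub_eq_zero] at this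
      exact this
    · exact LinearMap.le_ker_iff_map.2 (hann (i + 2) (by omega) hi) hx
  -- For `i ≤ p` the truncated exponent `i - p + 1` is `1`.
  have hstep : ∀ u, p < u →
      (∀ i < u, ∀ x ∈ G i, ((1 - S ^ 2 : Module.End k H) ^ (i - p + 1)) x = 0) →
      ∀ x ∈ G u, ((1 - S ^ 2 : Module.End k H) ^ (u - p)) x ∈ primitives k H 1 := by
    intro u hu ih x hx
    obtain ⟨m, rfl⟩ : ∃ m, u = m + 1 := ⟨u - 1, by omega⟩
    rw [mem_primitives_iff, hS, comul_one_sub_sq_pow, ← hS]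
    have hw : (twist S ^ (m + 1 - p)) (Coalgebra.comul (R := k) x - x ⊗ₜ 1 - 1 ⊗ₜ x) = 0 := by
      refine (sum_submodule_le (K := LinearMap.ker _) fun i hi => tmulImage_le ?_) (hsplit m x hx)
      intro a ha b hb
      have hi := Finset.mem_range.1 hi
      exact twist_pow_tmul_eq_zero S _ _ _ a b (ih _ (by omega) a ha) (ih _ (by omega) b hb)
        (by omega)
    rw [map_sub, map_sub, twist_pow_one_tmul S hS1, twist_pow_tmul_one S hS1, sub_sub,
      sub_eq_zero] at hw
    exact hw
  have hkill : ∀ i, ∀ x ∈ G i, ((1 - S ^ 2 : Module.End k H) ^ (i - p + 1)) x = 0 := by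
    intro i
    induction i using Nat.strong_induction_on with
    | _ i ih =>
      intro x hx
      rcases le_or_gt i p with hi | hi
      · rw [Nat.sub_eq_zero_of_le hi, zero_add, pow_one]
        exact hlow i hi x hx
      · rw [pow_succ', Module.End.mul_apply]
        exact hprime _ (hstep i hi ih x hx)
  have hkill' : ∀ i n, i - p + 1 ≤ n → ∀ x ∈ G i, ((1 - S ^ 2 : Module.End k H) ^ n) x = 0 := by
    intro i n hn x hx
    rw [← Nat.sub_add_cancel hn, pow_add, Module.End.mul_apply, hkill i x hx, map_zero]
  have hprim : ∀ u, p < u → ∑ i ∈ Finset.range (u + 1), G i ≤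
      (primitives k H 1).comap ((1 - S ^ 2 : Module.End k H) ^ (u - p) : Module.End k H) := by
    intro u hu
    refine sum_submodule_le fun i hi x hx => ?_
    have hi := Finset.mem_range.1 hi
    rw [Submodule.mem_comap]
    rcases (show i ≤ u by omega).eq_or_lt with rfl | hiu
    · exact hstep i hu (fun i _ => hkill i) x hx
    · rw [hkill' i (u - p) (by omega) x hx]
      exact Submodule.zero_mem _
  refine ⟨fun u hu => ⟨Submodule.map_le_iff_le_comap.2 (hprim u hu), ?_⟩, fun u hu => ?_⟩
  · rw [← LinearMap.le_ker_iff_map]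
    intro x hx
    rw [LinearMap.mem_ker]
    rw [Module.End.mul_apply]
    exact hprimS _ (hprim u hu hx)
  · rw [← le_bot_iff, Submodule.map_le_iff_le_comap]
    refine sum_submodule_le fun i hi x hx => ?_
    have hi := Finset.mem_range.1 hi
    exact hkill' i (u - p + 1) (by omega) x hx
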